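/- arXiv:2307.06649 — 2 statements merged into one kernel-verified Lean document; each statement's English description precedes it below -/
import Mathlib

section
/- Let G be a finite connected simple bridgeless cubic graph such that the line graph L(G) is not a complete graph, and let v be a vertex of L(G). Then every minimal vertex cut of L(G) centered at v has cardinality 2, 3, or 4; in particular no single vertex of L(G) is a cut vertex. -/
open SimpleGraph

/-- A set `S` of vertices of a graph `H` is a vertex cut if deleting `S` disconnects `H`:
the subgraph induced on the complement of `S` is not preconnected. -/
def IsVertexCut {W : Type*} (H : SimpleGraph W) (S : Set W) : Prop :=
  ¬ (H.induce Sᶜ).Preconnected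

/-- A minimal vertex cut of `H` centered at `v`: a vertex cut `S` with `v ∈ S` such that
no proper subset `S \ {v'}` (for `v' ∈ S`) is a vertex cut, and whose cardinality is
minimal among all such sets. -/
def IsMinimalCenteredVertexCut {W : Type*} (H : SimpleGraph W) (v : W) (S : Set W) : Prop :=
  IsVertexCut H S ∧ v ∈ S ∧ (∀ v' ∈ S, ¬ IsVertexCut H (S \ {v'})) ∧
    ∀ T : Set W, IsVertexCut H T → v ∈ T → (∀ v' ∈ T, ¬ IsVertexCut H (T \ {v'})) →
      S.ncard ≤ T.ncard

/-!
Line graphs are claw-free. Let `H` be a connected claw-free graph and call a component of `H - S`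
full if every vertex of `S` has a neighbour in it. If two components of `H - S` are full, then `S`
is an inclusion-minimal cut: putting `s ∈ S` back merges these two, and a component of the rest
would be joined to some `m ∈ S`, which together with one neighbour in each of the three components
would span a claw.

If `S` is an inclusion-minimal cut containing `v`, then all components of `H - S` are full, so `v`
has neighbours `f` and `g` in different components. The neighbours of `f` that are adjacent to the
component of `g` in `H - N(f)` form a cut containing `v` with two full components, so a minimal cut
centered at `v` has at most `|N(f)|` elements. In the line graph of a graph of maximum degree `d`
this is at most `2(d - 1)`. Finally, an edge that is a cut vertex of the line graph is a bridge.
-/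

section ClawFree

variable {W : Type*} {H : SimpleGraph W} {S : Set W}

/-- A graph is claw-free if among any three neighbours of a vertex two are adjacent, that is, if
`K_{1,3}` is not an induced subgraph. -/
def IsClawFree (H : SimpleGraph W) : Prop :=
  ∀ ⦃v a b c⦄, H.Adj v a → H.Adj v b → H.Adj v c → a ≠ b → a ≠ c → b ≠ c →
    H.Adj a b ∨ H.Adj a c ∨ H.Adj b c

/-- A component of `H - S` is full if every vertex of `S` has a neighbour in it. -/
def IsFullComponent (C : H.ComponentCompl S) : Prop :=
  ∀ s ∈ S, ∃ c ∈ C, H.Adj s c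

theorem isVertexCut_iff_nontrivial_componentCompl :
    IsVertexCut H S ↔ Nontrivial (H.ComponentCompl S) := by
  rw [IsVertexCut, ← not_subsingleton_iff_nontrivial, not_iff_not]
  exact ⟨fun h => h.subsingleton_connectedComponent,
    fun h a b => ConnectedComponent.exact (h.elim (connectedComponentMk _ a) _)⟩

theorem isVertexCut_empty_iff : IsVertexCut H ∅ ↔ ¬ H.Preconnected := by
  rw [IsVertexCut, Set.compl_empty, (induceUnivIso H).preconnected_iff]

theorem componentCompl_eq_of_mem {C D : H.ComponentCompl S} {x : W} (hC : x ∈ C) (hD : x ∈ D) :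
    C = D :=
  hC.choose_spec.symm.trans hD.choose_spec

theorem not_adj_of_componentCompl_ne {C D : H.ComponentCompl S} (hCD : C ≠ D) {c d : W}
    (hc : c ∈ C) (hd : d ∈ D) : ¬ H.Adj c d := fun h =>
  hCD (componentCompl_eq_of_mem
    (ComponentCompl.mem_of_adj c d hc (ComponentCompl.notMem_of_mem hd) h) hd)

theorem exists_boundary_adj_of_preconnected (hH : H.Preconnected) {P : Set W} {x y : W}
    (hx : x ∈ P) (hy : y ∉ P) : ∃ a ∈ P, ∃ b ∉ P, H.Adj a b := by
  obtain ⟨p⟩ := hH x y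
  obtain ⟨⟨⟨a, b⟩, hab⟩, -, ha, hb⟩ := p.exists_boundary_dart P hx hy
  exact ⟨a, ha, b, hb, hab⟩

theorem exists_boundary_adj_of_mem_componentCompl {C : H.ComponentCompl S} {P : Set W} {x y : W}
    (hxC : x ∈ C) (hyC : y ∈ C) (hx : x ∈ P) (hy : y ∉ P) :
    ∃ a ∈ P, ∃ b ∉ P, b ∉ S ∧ H.Adj a b := by
  obtain ⟨hxS, rfl⟩ := hxC
  obtain ⟨hyS, hyx⟩ := hyC
  obtain ⟨p⟩ := ConnectedComponent.exact hyx.symm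
  obtain ⟨⟨⟨a, b⟩, hab⟩, -, ha, hb⟩ := p.exists_boundary_dart (Subtype.val ⁻¹' P) hx hy
  exact ⟨a, ha, b, hb, b.2, hab⟩

theorem isFullComponent_of_forall_not_isVertexCut_sdiff
    (hS : ∀ s ∈ S, ¬ IsVertexCut H (S \ {s})) (C : H.ComponentCompl S) : IsFullComponent C := by
  intro s hs
  obtain ⟨c, hc⟩ := C.nonempty
  have hsub := hS s hs
  rw [isVertexCut_iff_nontrivial_componentCompl, not_nontrivial_iff_subsingleton] at hsub
  have hcs : c ∉ S \ {s} := fun h => ComponentCompl.notMem_of_mem hc h.1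
  have hss : s ∉ S \ {s} := fun h => h.2 rfl
  obtain ⟨a, ha, b, hb, hbS, hab⟩ := exists_boundary_adj_of_mem_componentCompl
    (componentComplMk_mem H hcs) ⟨hss, hsub.elim _ _⟩ hc
    (fun h => ComponentCompl.notMem_of_mem h hs)
  have hbs : b = s := by
    by_contra hne
    exact hb (ComponentCompl.mem_of_adj a b ha (fun h => hbS ⟨h, hne⟩) hab)
  exact ⟨a, ha, hbs ▸ hab.symm⟩

theorem IsClawFree.not_isVertexCut_sdiff_singleton (hclaw : IsClawFree H) (hH : H.Preconnected)
    {A B : H.ComponentCompl S} (hAB : A ≠ B) (hA : IsFullComponent A) (hB : IsFullComponent B)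
    {s : W} (hs : s ∈ S) : ¬ IsVertexCut H (S \ {s}) := by
  rw [isVertexCut_iff_nontrivial_componentCompl]
  intro _
  have hss : s ∉ S \ {s} := fun h => h.2 rfl
  obtain ⟨Q, hQ⟩ := exists_ne (H.componentComplMk hss)
  have full_disjoint : ∀ C : H.ComponentCompl S, IsFullComponent C → ∀ c ∈ C, c ∉ Q := by
    intro C hC c hc hcQ
    obtain ⟨c', hc', hsc'⟩ := hC s hs
    have hCQ : C.hom Set.sdiff_subset = Q :=
      componentCompl_eq_of_mem (C.subset_hom Set.sdiff_subset hc) hcQ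
    exact not_adj_of_componentCompl_ne hQ (hCQ ▸ C.subset_hom Set.sdiff_subset hc')
      (componentComplMk_mem H hss) hsc'.symm
  obtain ⟨q₀, hq₀⟩ := Q.nonempty
  obtain ⟨q, hq, m, hmQ, hqm⟩ := exists_boundary_adj_of_preconnected hH hq₀
    (fun h => hQ (componentCompl_eq_of_mem h (componentComplMk_mem H hss)))
  have hm : m ∈ S \ {s} := by
    by_contra hm
    exact hmQ (ComponentCompl.mem_of_adj q m hq hm hqm)
  obtain ⟨a, ha, hma⟩ := hA m hm.1
  obtain ⟨b, hb, hmb⟩ := hB m hm.1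
  have haQ := full_disjoint A hA a ha
  have hbQ := full_disjoint B hB b hb
  have not_adj_q : ∀ x ∉ S, x ∉ Q → ¬ H.Adj x q := fun x hx hxQ h =>
    hxQ (ComponentCompl.mem_of_adj q x hq (fun h' => hx h'.1) h.symm)
  rcases hclaw hma hmb hqm.symm (fun h => hAB (componentCompl_eq_of_mem ha (h ▸ hb)))
    (fun h => haQ (h ▸ hq)) (fun h => hbQ (h ▸ hq)) with hab | haq | hbq
  · exact not_adj_of_componentCompl_ne hAB ha hb hab
  · exact not_adj_q a (ComponentCompl.notMem_of_mem ha) haQ haq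
  · exact not_adj_q b (ComponentCompl.notMem_of_mem hb) hbQ hbq

theorem exists_ne_isFullComponent_subset_neighborSet {f g : W} (hne : f ≠ g)
    (hfg : ¬ H.Adj f g) :
    ∃ T ⊆ H.neighborSet f, H.neighborSet f ∩ H.neighborSet g ⊆ T ∧
      ∃ A B : H.ComponentCompl T, A ≠ B ∧ IsFullComponent A ∧ IsFullComponent B := by
  let C : H.ComponentCompl (H.neighborSet f) := H.componentComplMk hfg
  have hgC : g ∈ C := componentComplMk_mem H hfg
  let T : Set W := {t ∈ H.neighborSet f | ∃ c ∈ C, H.Adj t c}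
  have hTf : T ⊆ H.neighborSet f := Set.sep_subset _ _
  have hfT : f ∉ T := fun h => H.irrefl h.1
  have hgT : g ∉ T := fun h => hfg h.1
  have hfC : f ∉ C := by
    intro hf
    obtain ⟨a, rfl, b, -, hb, hab⟩ :=
      exists_boundary_adj_of_mem_componentCompl hf hgC (Set.mem_singleton f) hne.symm
    exact hb hab
  refine ⟨T, hTf, fun t ht => ⟨ht.1, g, hgC, ht.2.symm⟩,
    H.componentComplMk hfT, H.componentComplMk hgT, fun hAB => ?_,
    fun t ht => ⟨f, componentComplMk_mem H hfT, ht.1.symm⟩, fun t ⟨_, c, hc, htc⟩ =>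
      ⟨c, C.subset_hom hTf hc, htc⟩⟩
  obtain ⟨a, ha, b, hb, hbT, hab⟩ := exists_boundary_adj_of_mem_componentCompl
    (componentComplMk_mem H hgT) ⟨hfT, hAB⟩ hgC hfC
  have hfb : H.Adj f b := by
    by_contra hfb
    exact hb (ComponentCompl.mem_of_adj a b ha hfb hab)
  exact hbT ⟨hfb, a, ha, hab.symm⟩

theorem IsMinimalCenteredVertexCut.ncard_le (hclaw : IsClawFree H) (hH : H.Preconnected) {n : ℕ}
    (hn : ∀ x, (H.neighborSet x).encard ≤ n) {v : W} (hS : IsMinimalCenteredVertexCut H v S) :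
    S.ncard ≤ n := by
  obtain ⟨hcut, hvS, hdiff, hmin⟩ := hS
  obtain ⟨C, D, hCD⟩ := (isVertexCut_iff_nontrivial_componentCompl.1 hcut).exists_pair_ne
  obtain ⟨f, hf, hvf⟩ := isFullComponent_of_forall_not_isVertexCut_sdiff hdiff C v hvS
  obtain ⟨g, hg, hvg⟩ := isFullComponent_of_forall_not_isVertexCut_sdiff hdiff D v hvS
  have hne : f ≠ g := fun h => hCD (componentCompl_eq_of_mem hf (h ▸ hg))
  obtain ⟨T, hTf, hT, A, B, hAB, hA, hB⟩ := exists_ne_isFullComponent_subset_neighborSet hne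
    (not_adj_of_componentCompl_ne hCD hf hg)
  have hTcut : IsVertexCut H T := isVertexCut_iff_nontrivial_componentCompl.2 ⟨A, B, hAB⟩
  calc S.ncard ≤ T.ncard := hmin T hTcut (hT ⟨hvf.symm, hvg.symm⟩)
        fun _ => hclaw.not_isVertexCut_sdiff_singleton hH hAB hA hB
    _ ≤ n := ENat.toNat_le_of_le_natCast ((Set.encard_le_encard hTf).trans (hn f))

end ClawFree

section LineGraph

variable {V : Type*} {G : SimpleGraph V}

theorem isClawFree_lineGraph : IsClawFree G.lineGraph := by
  intro e a b c hea heb hec hab hac hbc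
  simp only [lineGraph_adj_iff_exists] at *
  obtain ⟨-, x, hxe, hxa⟩ := hea
  obtain ⟨-, y, hye, hyb⟩ := heb
  obtain ⟨-, z, hze, hzc⟩ := hec
  have pigeonhole : x = y ∨ x = z ∨ y = z := by
    by_contra! h
    have he := (Sym2.mem_and_mem_iff h.1).1 ⟨hxe, hye⟩
    rw [he, Sym2.mem_iff] at hze
    exact hze.elim h.2.1.symm h.2.2.symm
  rcases pigeonhole with rfl | rfl | rfl
  · exact .inl ⟨hab, x, hxa, hyb⟩
  · exact .inr (.inl ⟨hac, x, hxa, hzc⟩)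
  · exact .inr (.inr ⟨hbc, y, hyb, hzc⟩)

theorem not_isVertexCut_lineGraph_of_preconnected_deleteEdges {T : Set G.edgeSet}
    (h : (G.deleteEdges (Subtype.val '' T)).Preconnected) : ¬ IsVertexCut G.lineGraph T := by
  rw [isVertexCut_iff_nontrivial_componentCompl]
  rintro ⟨C, D, hCD⟩
  have mem_of_common_end : ∀ e ∈ C, ∀ e' ∉ T, ∀ x ∈ (e : Sym2 V), x ∈ (e' : Sym2 V) → e' ∈ C := by
    intro e he e' he' x hx hx'
    by_cases hee' : e = e'
    · exact hee' ▸ he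
    · exact ComponentCompl.mem_of_adj e e' he he' (lineGraph_adj_iff_exists.2 ⟨hee', x, hx, hx'⟩)
  obtain ⟨e, he⟩ := C.nonempty
  obtain ⟨e', he'⟩ := D.nonempty
  obtain ⟨a, ⟨k, hk, hak⟩, b, hb, hab⟩ := exists_boundary_adj_of_preconnected h
    (P := {x | ∃ k ∈ C, x ∈ (k : Sym2 V)}) ⟨e, he, e.1.out_fst_mem⟩
    (fun ⟨k, hk, hx⟩ => hCD (componentCompl_eq_of_mem
      (mem_of_common_end k hk e' (ComponentCompl.notMem_of_mem he') _ hx e'.1.out_fst_mem) he'))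
  rw [deleteEdges_adj] at hab
  exact hb ⟨⟨s(a, b), hab.1⟩,
    mem_of_common_end k hk _ (fun hT => hab.2 ⟨_, hT, rfl⟩) a hak (Sym2.mem_mk_left a b),
    Sym2.mem_mk_right a b⟩

theorem preconnected_lineGraph (hG : G.Preconnected) : G.lineGraph.Preconnected := by
  have h : ¬ IsVertexCut G.lineGraph ∅ :=
    not_isVertexCut_lineGraph_of_preconnected_deleteEdges (by simpa using hG)
  rwa [isVertexCut_empty_iff, not_not] at h

theorem encard_incidenceSet_sdiff_singleton [G.LocallyFinite] {x : V} {e : Sym2 V}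
    (he : e ∈ G.incidenceSet x) : (G.incidenceSet x \ {e}).encard = (G.degree x - 1 : ℕ) := by
  classical
  rw [Set.encard_sdiff_singleton_of_mem he, ← Set.coe_fintypeCard,
    card_incidenceSet_eq_degree, ENat.natCast_sub, Nat.cast_one]

theorem encard_neighborSet_lineGraph_le [G.LocallyFinite] {x y : V} (hxy : G.Adj x y) :
    (G.lineGraph.neighborSet ⟨s(x, y), hxy⟩).encard ≤
      (G.degree x - 1 + (G.degree y - 1) : ℕ) := by
  have hcover : Subtype.val '' G.lineGraph.neighborSet ⟨s(x, y), hxy⟩ ⊆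
      (G.incidenceSet x \ {s(x, y)}) ∪ (G.incidenceSet y \ {s(x, y)}) := by
    rintro _ ⟨e, he, rfl⟩
    obtain ⟨hne, z, hz, hze⟩ := lineGraph_adj_iff_exists.1 he
    have hne' : (e : Sym2 V) ≠ s(x, y) := fun h => hne (Subtype.ext h.symm)
    rcases Sym2.mem_iff.1 hz with rfl | rfl
    · exact .inl ⟨⟨e.2, hze⟩, hne'⟩
    · exact .inr ⟨⟨e.2, hze⟩, hne'⟩
  calc (G.lineGraph.neighborSet ⟨s(x, y), hxy⟩).encard
      = (Subtype.val '' G.lineGraph.neighborSet ⟨s(x, y), hxy⟩).encard :=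
        (Subtype.val_injective.encard_image _).symm
    _ ≤ (G.incidenceSet x \ {s(x, y)}).encard + (G.incidenceSet y \ {s(x, y)}).encard :=
        (Set.encard_le_encard hcover).trans (Set.encard_union_le _ _)
    _ = (G.degree x - 1 + (G.degree y - 1) : ℕ) := by
        rw [encard_incidenceSet_sdiff_singleton ⟨hxy, Sym2.mem_mk_left x y⟩,
          encard_incidenceSet_sdiff_singleton ⟨hxy, Sym2.mem_mk_right x y⟩, Nat.cast_add]

end LineGraph

theorem minimal_centered_vertexCut_card_general {V : Type*} (G : SimpleGraph V) [G.LocallyFinite]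
    (hconn : G.Connected) (hbridgeless : ∀ e : Sym2 V, ¬ G.IsBridge e) {d : ℕ}
    (hdeg : ∀ x, G.degree x ≤ d) (v : G.edgeSet) :
    (∀ S : Set G.edgeSet, S.Finite → IsMinimalCenteredVertexCut G.lineGraph v S →
      2 ≤ S.ncard ∧ S.ncard ≤ 2 * (d - 1)) ∧
    (∀ w : G.edgeSet, ¬ IsVertexCut G.lineGraph {w}) := by
  have hcut : ∀ w : G.edgeSet, ¬ IsVertexCut G.lineGraph {w} := by
    rintro ⟨⟨x, y⟩, hxy⟩
    apply not_isVertexCut_lineGraph_of_preconnected_deleteEdges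
    rw [Set.image_singleton]
    exact (hconn.connected_delete_edge_of_not_isBridge (hbridgeless s(x, y))).preconnected
  refine ⟨fun S hfin hS => ⟨?_, ?_⟩, hcut⟩
  · have hnontriv : S.Nontrivial := by
      by_contra h
      rw [Set.not_nontrivial_iff] at h
      exact hcut v (h.eq_singleton_of_mem hS.2.1 ▸ hS.1)
    exact (Set.one_lt_ncard hfin).2 hnontriv
  · refine hS.ncard_le isClawFree_lineGraph (preconnected_lineGraph hconn.preconnected) ?_
    rintro ⟨⟨x, y⟩, hxy⟩
    have hdeg_xy : G.degree x - 1 + (G.degree y - 1) ≤ 2 * (d - 1) := by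
      have := hdeg x
      have := hdeg y
      omega
    exact (encard_neighborSet_lineGraph_le hxy).trans (Nat.cast_le.2 hdeg_xy)

/-- **Sizes of minimal centered vertex cuts in the line graph of a bridgeless cubic
graph.**  Let `G` be a finite connected simple bridgeless cubic graph whose line graph
`L(G)` is not complete, and let `v` be a vertex of `L(G)`.  Then every minimal vertex cut
of `L(G)` centered at `v` has cardinality `2`, `3` or `4`; in particular no single vertex
of `L(G)` is a cut vertex. -/
theorem minimal_centered_vertexCut_card {V : Type*} [Fintype V] (G : SimpleGraph V)
    [DecidableRel G.Adj] (hconn : G.Connected)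
    (hbridgeless : ∀ e : Sym2 V, ¬ G.IsBridge e) (hcubic : ∀ v : V, G.degree v = 3)
    (hnotcomplete : G.lineGraph ≠ ⊤) (v : G.edgeSet) :
    (∀ S : Set G.edgeSet, IsMinimalCenteredVertexCut G.lineGraph v S →
      S.ncard = 2 ∨ S.ncard = 3 ∨ S.ncard = 4) ∧
    (∀ w : G.edgeSet, ¬ IsVertexCut G.lineGraph {w}) := by
  obtain ⟨hcard, hcut⟩ :=
    minimal_centered_vertexCut_card_general G hconn hbridgeless (fun x => (hcubic x).le) v
  exact ⟨fun S hS => by have := hcard S S.toFinite hS; omega, hcut⟩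
end

section
/- Let G be a finite connected simple bridgeless cubic graph, let v be a vertex of the line graph L(G), and let S be a minimal vertex cut of L(G) centered at v. Then no triangle of L(G) has all three of its vertices contained in S. -/
open SimpleGraph

/-!
If no single element can be left out of a vertex cut `S` of `L(G)`, then every component of
`L(G) - S` contains an edge at one of the two ends of each `e ∈ S`. Edges outside `S` that share an
end lie in the same component, and there are at least two components, so each of them touches
exactly one end of every `e ∈ S`. Being touched by one fixed component therefore two-colors the
graph with edge set `S`, which excludes a triangle of `G` in `S`; and every end of an edge of `S` is
touched by some component, hence also lies on an edge outside `S`, which excludes three edges of `S`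
at a vertex of degree at most three. A triangle of `L(G)` is one of these two configurations.
-/

section VertexCut

variable {W : Type*} {H : SimpleGraph W} {S : Set W} {w : W}

/-- A vertex cut is irredundant if it stops being a vertex cut whenever a single vertex is removed
from it. This is weaker than minimality under inclusion, since a set containing a vertex cut need
not be a vertex cut. -/
structure IsIrredundantVertexCut (H : SimpleGraph W) (S : Set W) : Prop where
  isVertexCut : IsVertexCut H S
  not_isVertexCut_diff_singleton : ∀ w ∈ S, ¬ IsVertexCut H (S \ {w})

theorem IsMinimalCenteredVertexCut.isIrredundantVertexCut
    (hS : IsMinimalCenteredVertexCut H w S) : IsIrredundantVertexCut H S :=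
  ⟨hS.1, hS.2.2.1⟩

theorem IsVertexCut.nontrivial_connectedComponent (hS : IsVertexCut H S) :
    Nontrivial (H.induce Sᶜ).ConnectedComponent := by
  by_contra htriv
  rw [not_nontrivial_iff_subsingleton] at htriv
  exact hS fun f g => ConnectedComponent.exact (Subsingleton.elim _ _)

theorem exists_adj_mem_supp_of_not_isVertexCut_diff_singleton (hw : w ∈ S)
    (hcut : ¬ IsVertexCut H (S \ {w})) (C : (H.induce Sᶜ).ConnectedComponent) :
    ∃ u ∈ C.supp, H.Adj w u := by
  obtain ⟨f, hf⟩ := C.nonempty_supp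
  obtain ⟨walk⟩ : (H.induce (S \ {w})ᶜ).Reachable ⟨f, fun h => f.2 h.1⟩ ⟨w, fun h => h.2 rfl⟩ :=
    not_not.mp hcut _ _
  obtain ⟨⟨⟨u, x⟩, hux⟩, -, ⟨hu, huC⟩, hx⟩ :=
    walk.exists_boundary_dart {u | ∃ hu : (u : W) ∉ S, ⟨u, hu⟩ ∈ C.supp} ⟨f.2, hf⟩
      fun h => h.1 hw
  have hadj : H.Adj u x := hux
  -- A step leaving `C` cannot stay outside `S`, so it ends at `w`.
  have hxw : (x : W) = w := by
    by_contra hne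
    have hxS : (x : W) ∉ S := fun h => x.2 ⟨h, hne⟩
    exact hx ⟨hxS, C.mem_supp_of_adj_mem_supp (v := ⟨x, hxS⟩) huC hadj⟩
  rw [hxw] at hadj
  exact ⟨⟨u, hu⟩, huC, hadj.symm⟩

end VertexCut

section LineGraph

variable {V : Type*} {G : SimpleGraph V} {S : Set G.edgeSet} {e : G.edgeSet} {x y : V}

/-- The vertices of `G` touched by a component `C` of `L(G) - S`, that is, the ends of the edges of
`G` belonging to `C`. -/
def endsOfComponent (C : (G.lineGraph.induce Sᶜ).ConnectedComponent) : Set V :=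
  {x | ∃ g ∈ C.supp, x ∈ (g : G.edgeSet).1}

theorem eq_of_mem_endsOfComponent {C D : (G.lineGraph.induce Sᶜ).ConnectedComponent}
    (hC : x ∈ endsOfComponent C) (hD : x ∈ endsOfComponent D) : C = D := by
  obtain ⟨g, hgC, hxg⟩ := hC
  obtain ⟨h, hhD, hxh⟩ := hD
  by_cases hgh : g = h
  · exact ConnectedComponent.eq_of_common_vertex hgC (hgh ▸ hhD)
  · have hadj : (G.lineGraph.induce Sᶜ).Adj g h :=
      lineGraph_adj_iff_exists.mpr ⟨fun heq => hgh (Subtype.ext heq), x, hxg, hxh⟩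
    exact ConnectedComponent.eq_of_common_vertex (C.mem_supp_of_adj_mem_supp hgC hadj) hhD

namespace IsIrredundantVertexCut

theorem mem_endsOfComponent_or (hS : IsIrredundantVertexCut G.lineGraph S) (he : e ∈ S)
    (hxy : e.1 = s(x, y)) (C : (G.lineGraph.induce Sᶜ).ConnectedComponent) :
    x ∈ endsOfComponent C ∨ y ∈ endsOfComponent C := by
  obtain ⟨g, hgC, hadj⟩ := exists_adj_mem_supp_of_not_isVertexCut_diff_singleton he
    (hS.not_isVertexCut_diff_singleton e he) C
  obtain ⟨-, z, hze, hzg⟩ := lineGraph_adj_iff_exists.mp hadj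
  rw [hxy, Sym2.mem_iff] at hze
  rcases hze with rfl | rfl
  · exact Or.inl ⟨g, hgC, hzg⟩
  · exact Or.inr ⟨g, hgC, hzg⟩

theorem mem_endsOfComponent_iff_notMem (hS : IsIrredundantVertexCut G.lineGraph S) (he : e ∈ S)
    (hxy : e.1 = s(x, y)) (C : (G.lineGraph.induce Sᶜ).ConnectedComponent) :
    x ∈ endsOfComponent C ↔ y ∉ endsOfComponent C := by
  refine ⟨fun hx hy => ?_, (hS.mem_endsOfComponent_or he hxy C).resolve_right⟩
  have := hS.isVertexCut.nontrivial_connectedComponent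
  obtain ⟨D, hDC⟩ := exists_ne C
  rcases hS.mem_endsOfComponent_or he hxy D with hxD | hyD
  · exact hDC (eq_of_mem_endsOfComponent hxD hx)
  · exact hDC (eq_of_mem_endsOfComponent hyD hy)

theorem isBipartite_fromEdgeSet (hS : IsIrredundantVertexCut G.lineGraph S) :
    (fromEdgeSet (Subtype.val '' S)).IsBipartite := by
  have := hS.isVertexCut.nontrivial_connectedComponent
  obtain ⟨C⟩ : Nonempty (G.lineGraph.induce Sᶜ).ConnectedComponent := inferInstance
  refine IsBipartiteWith.isBipartite (s := endsOfComponent C) (t := (endsOfComponent C)ᶜ)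
    ⟨disjoint_compl_right, fun x y hadj => ?_⟩
  obtain ⟨⟨e, he, hxy⟩, -⟩ := (fromEdgeSet_adj _).mp hadj
  have hiff := hS.mem_endsOfComponent_iff_notMem he hxy C
  simp only [Set.mem_compl_iff]
  tauto

theorem exists_notMem_mem (hS : IsIrredundantVertexCut G.lineGraph S) (he : e ∈ S)
    (hx : x ∈ e.1) : ∃ g : G.edgeSet, g ∉ S ∧ x ∈ g.1 := by
  obtain ⟨y, hxy⟩ := Sym2.mem_iff_exists.mp hx
  suffices ∃ C : (G.lineGraph.induce Sᶜ).ConnectedComponent, x ∈ endsOfComponent C by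
    obtain ⟨C, g, -, hxg⟩ := this
    exact ⟨g, g.2, hxg⟩
  by_contra! hnone
  have := hS.isVertexCut.nontrivial_connectedComponent
  obtain ⟨C, D, hCD⟩ := exists_pair_ne (G.lineGraph.induce Sᶜ).ConnectedComponent
  have hy := fun K => (hS.mem_endsOfComponent_or he hxy K).resolve_left (hnone K)
  exact hCD (eq_of_mem_endsOfComponent (hy C) (hy D))

theorem card_lt_degree [Fintype (G.neighborSet x)] (hS : IsIrredundantVertexCut G.lineGraph S)
    {T : Finset G.edgeSet} (hT : T.Nonempty) (hTS : ↑T ⊆ S) (hxT : ∀ e ∈ T, x ∈ e.1) :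
    T.card < G.degree x := by
  classical
  obtain ⟨e, he⟩ := hT
  obtain ⟨g, hgS, hxg⟩ := hS.exists_notMem_mem (hTS he) (hxT e he)
  have hsub : T.map (Function.Embedding.subtype _) ⊆ G.incidenceFinset x := by
    intro f hf
    obtain ⟨e, he, rfl⟩ := Finset.mem_map.mp hf
    exact (G.mem_incidenceFinset x _).mpr ⟨e.2, hxT e he⟩
  have hg : g.1 ∈ G.incidenceFinset x := (G.mem_incidenceFinset x _).mpr ⟨g.2, hxg⟩
  have hgT : g.1 ∉ T.map (Function.Embedding.subtype _) := fun h =>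
    hgS (hTS ((Finset.mem_map' (Function.Embedding.subtype _)).mp h))
  calc T.card = (T.map (Function.Embedding.subtype _)).card := (Finset.card_map _).symm
    _ < (G.incidenceFinset x).card :=
      Finset.card_lt_card ((Finset.ssubset_iff_of_subset hsub).mpr ⟨g, hg, hgT⟩)
    _ = G.degree x := G.card_incidenceFinset_eq_degree x

end IsIrredundantVertexCut

theorem exists_common_vertex_or_triangle_of_lineGraph_adj {a b c : G.edgeSet}
    (hab : G.lineGraph.Adj a b) (hbc : G.lineGraph.Adj b c) (hac : G.lineGraph.Adj a c) :
    (∃ p, p ∈ a.1 ∧ p ∈ b.1 ∧ p ∈ c.1) ∨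
      ∃ p q r, p ≠ q ∧ q ≠ r ∧ p ≠ r ∧ a.1 = s(p, r) ∧ b.1 = s(p, q) ∧ c.1 = s(q, r) := by
  obtain ⟨-, p, hpa, hpb⟩ := lineGraph_adj_iff_exists.mp hab
  obtain ⟨-, q, hqb, hqc⟩ := lineGraph_adj_iff_exists.mp hbc
  obtain ⟨-, r, hra, hrc⟩ := lineGraph_adj_iff_exists.mp hac
  by_cases hpq : p = q
  · exact Or.inl ⟨p, hpa, hpb, hpq ▸ hqc⟩
  by_cases hpr : p = r
  · exact Or.inl ⟨p, hpa, hpb, hpr ▸ hrc⟩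
  by_cases hqr : q = r
  · exact Or.inl ⟨q, hqr ▸ hra, hqb, hqc⟩
  exact Or.inr ⟨p, q, r, hpq, hqr, hpr, (Sym2.mem_and_mem_iff hpr).mp ⟨hpa, hra⟩,
    (Sym2.mem_and_mem_iff hpq).mp ⟨hpb, hqb⟩, (Sym2.mem_and_mem_iff hqr).mp ⟨hqc, hrc⟩⟩

end LineGraph

theorem no_triangle_in_minimal_centered_vertexCut_general {V : Type*} (G : SimpleGraph V)
    [G.LocallyFinite] (hdeg : ∀ x : V, G.degree x ≤ 3) {S : Set G.edgeSet}
    (hS : IsIrredundantVertexCut G.lineGraph S) :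
    ∀ a b c : G.edgeSet, G.lineGraph.Adj a b → G.lineGraph.Adj b c →
      G.lineGraph.Adj a c → ¬ (a ∈ S ∧ b ∈ S ∧ c ∈ S) := by
  classical
  rintro a b c hab hbc hac ⟨ha, hb, hc⟩
  rcases exists_common_vertex_or_triangle_of_lineGraph_adj hab hbc hac with
    ⟨p, hpa, hpb, hpc⟩ | ⟨p, q, r, hpq, hqr, hpr, hpra, hpqb, hqrc⟩
  · have hlt : ({a, b, c} : Finset G.edgeSet).card < G.degree p :=
      hS.card_lt_degree (by simp) (by simp [Set.insert_subset_iff, ha, hb, hc])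
        (by simp [hpa, hpb, hpc])
    rw [Finset.card_eq_three.mpr ⟨a, b, c, hab.ne, hac.ne, hbc.ne, rfl⟩] at hlt
    exact (hdeg p).not_gt hlt
  · have htriangle : (fromEdgeSet (Subtype.val '' S)).IsNClique 3 {p, q, r} :=
      is3Clique_triple_iff.mpr ⟨(fromEdgeSet_adj _).mpr ⟨⟨b, hb, hpqb⟩, hpq⟩,
        (fromEdgeSet_adj _).mpr ⟨⟨a, ha, hpra⟩, hpr⟩, (fromEdgeSet_adj _).mpr ⟨⟨c, hc, hqrc⟩, hqr⟩⟩
    exact hS.isBipartite_fromEdgeSet.cliqueFree (by norm_num) _ htriangle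

/-- **No triangle of the line graph lies inside a minimal centered vertex cut.**
Let `G` be a finite connected simple bridgeless cubic graph, `v` a vertex of the line
graph `L(G)` and `S` a minimal vertex cut of `L(G)` centered at `v`.  Then no triangle of
`L(G)` has all three of its vertices contained in `S`. -/
theorem no_triangle_in_minimal_centered_vertexCut {V : Type*} [Fintype V]
    (G : SimpleGraph V) [DecidableRel G.Adj] (hconn : G.Connected)
    (hbridgeless : ∀ e : Sym2 V, ¬ G.IsBridge e) (hcubic : ∀ v : V, G.degree v = 3)
    (v : G.edgeSet) (S : Set G.edgeSet)
    (hS : IsMinimalCenteredVertexCut G.lineGraph v S) :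
    ∀ a b c : G.edgeSet, G.lineGraph.Adj a b → G.lineGraph.Adj b c →
      G.lineGraph.Adj a c → ¬ (a ∈ S ∧ b ∈ S ∧ c ∈ S) :=
  no_triangle_in_minimal_centered_vertexCut_general G (fun x => (hcubic x).le)
    hS.isIrredundantVertexCut
end
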